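/- If the metric g is conformal to a pure radiation metric with parallel rays spanned by K (ĝ = e^{2Υ}g aligned pure radiation), then the Weyl tensor of g satisfies C_{abcd}K^cX^d = 0 for all X ⊥ K, and the gradient Υ_a = ∇_aΥ satisfies (A_{abc} + C_{cba}{}^dΥ_d)X^a = 0 for all X ⊥ K. -/

import Mathlib

/- A coordinate-chart framework for pseudo-Riemannian geometry on ℝⁿ:
metric, Christoffel symbols, covariant derivatives, curvature, Ricci,
Schouten, Weyl, Cotton and Bach tensors, and the standard tractor
connection, all written in index notation. -/

noncomputable section

open scoped BigOperators

/-- Points of the chart ℝⁿ. -/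
abbrev Pt (n : ℕ) := Fin n → ℝ

/-- Partial derivative of a scalar function in the coordinate direction `a`. -/
def pd {n : ℕ} (a : Fin n) (f : Pt n → ℝ) (x : Pt n) : ℝ :=
  fderiv ℝ f x (Pi.single a 1)

/-- A smooth vector field. -/
def SmoothVF {n : ℕ} (K : Pt n → Pt n) : Prop := ∀ b, ContDiff ℝ (⊤ : ℕ∞) (fun x => K x b)

/-- A smooth one-form. -/
def SmoothForm {n : ℕ} (f : Pt n → Fin n → ℝ) : Prop := ∀ b, ContDiff ℝ (⊤ : ℕ∞) (fun x => f x b)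

/-- A pseudo-Riemannian metric (of arbitrary signature) in a global
coordinate chart on ℝⁿ, given by its components `g x a b`, together with the
components `ginv` of its pointwise inverse. -/
structure MetricG (n : ℕ) where
  g : Pt n → Fin n → Fin n → ℝ
  ginv : Pt n → Fin n → Fin n → ℝ
  symm : ∀ x a b, g x a b = g x b a
  smooth : ∀ a b, ContDiff ℝ (⊤ : ℕ∞) (fun x => g x a b)
  inv_mul : ∀ x a c, (∑ b, ginv x a b * g x b c) = if a = c then (1:ℝ) else 0

namespace MetricG

variable {n : ℕ} (G : MetricG n)

/-- The inner product of two tangent vectors at `x`. -/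
def ip (x : Pt n) (X Y : Pt n) : ℝ := ∑ a, ∑ b, G.g x a b * X a * Y b

/-- Christoffel symbols Γ^c_{ab} of the Levi-Civita connection. -/
def Γ (c a b : Fin n) (x : Pt n) : ℝ :=
  (1/2) * ∑ d, G.ginv x c d *
    (pd a (fun y => G.g y d b) x + pd b (fun y => G.g y d a) x - pd d (fun y => G.g y a b) x)

/-- Covariant derivative (∇_a X)^b of a vector field. -/
def covVec (X : Pt n → Pt n) (a b : Fin n) (x : Pt n) : ℝ :=
  pd a (fun y => X y b) x + ∑ c, G.Γ b a c x * X x c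

/-- Covariant derivative ∇_a ω_b of a one-form. -/
def cov1 (ω : Pt n → Fin n → ℝ) (a b : Fin n) (x : Pt n) : ℝ :=
  pd a (fun y => ω y b) x - ∑ e, G.Γ e a b x * ω x e

/-- Covariant derivative ∇_a T_{bc} of a (0,2)-tensor field. -/
def cov2 (T : Pt n → Fin n → Fin n → ℝ) (a b c : Fin n) (x : Pt n) : ℝ :=
  pd a (fun y => T y b c) x - ∑ e, G.Γ e a b x * T x e c - ∑ e, G.Γ e a c x * T x b e

/-- Covariant derivative ∇_a T_{bcd} of a (0,3)-tensor field. -/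
def cov3 (T : Pt n → Fin n → Fin n → Fin n → ℝ) (a b c d : Fin n) (x : Pt n) : ℝ :=
  pd a (fun y => T y b c d) x - ∑ e, G.Γ e a b x * T x e c d
    - ∑ e, G.Γ e a c x * T x b e d - ∑ e, G.Γ e a d x * T x b c e

/-- Curvature tensor R_{ab}{}^c{}_d, with the convention
`(∇_a∇_b − ∇_b∇_a)X^c = R_{ab}{}^c{}_d X^d`. -/
def Riem (a b c d : Fin n) (x : Pt n) : ℝ :=
  pd a (fun y => G.Γ c b d y) x - pd b (fun y => G.Γ c a d y) x
    + ∑ e, (G.Γ c a e x * G.Γ e b d x - G.Γ c b e x * G.Γ e a d x)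

/-- (4,0)-curvature tensor R_{abcd} = g_{ce} R_{ab}{}^e{}_d. -/
def Riem4 (a b c d : Fin n) (x : Pt n) : ℝ :=
  ∑ e, G.g x c e * G.Riem a b e d x

/-- Ricci tensor R_{bd} = R_{cb}{}^c{}_d. -/
def Ricci (b d : Fin n) (x : Pt n) : ℝ := ∑ c, G.Riem c b c d x

/-- Scalar curvature R = g^{ab} R_{ab}. -/
def Scal (x : Pt n) : ℝ := ∑ a, ∑ b, G.ginv x a b * G.Ricci a b x

/-- Schouten tensor P_{ab} = (1/(n−2)) (R_{ab} − R/(2(n−1)) g_{ab}). -/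
def Schouten (a b : Fin n) (x : Pt n) : ℝ :=
  (1 / ((n : ℝ) - 2)) * (G.Ricci a b x - G.Scal x / (2 * ((n : ℝ) - 1)) * G.g x a b)

/-- Weyl tensor C_{abcd} = R_{abcd} − 2(g_{c[a}P_{b]d} + g_{d[b}P_{a]c}). -/
def Weyl (a b c d : Fin n) (x : Pt n) : ℝ :=
  G.Riem4 a b c d x -
    (G.g x c a * G.Schouten b d x - G.g x c b * G.Schouten a d x
      + G.g x d b * G.Schouten a c x - G.g x d a * G.Schouten b c x)

/-- Cotton tensor A_{abc} = ∇_b P_{ca} − ∇_c P_{ba} (= 2∇_{[b}P_{c]a}). -/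
def Cotton (a b c : Fin n) (x : Pt n) : ℝ :=
  G.cov2 (fun y i j => G.Schouten i j y) b c a x - G.cov2 (fun y i j => G.Schouten i j y) c b a x

/-- Bach tensor B_{ab} = ∇^c A_{acb} + P^{dc} C_{dacb}. -/
def Bach (a b : Fin n) (x : Pt n) : ℝ :=
  (∑ c, ∑ e, G.ginv x c e * G.cov3 (fun y i j k => G.Cotton i j k y) e a c b x)
    + ∑ d, ∑ c, (∑ i, ∑ j, G.ginv x d i * G.ginv x c j * G.Schouten i j x) * G.Weyl d a c b x

/-- `K` is a null vector field. -/
def IsNull (K : Pt n → Pt n) : Prop := ∀ x, G.ip x (K x) (K x) = 0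

/-- Pure radiation condition: Ric(X,·) = 0 for every vector X orthogonal to K. -/
def PureRadiation (K : Pt n → Pt n) : Prop :=
  ∀ x (X : Pt n), G.ip x (K x) X = 0 → ∀ b, (∑ a, G.Ricci a b x * X a) = 0

/-- Parallel rays condition: ∇_a K^b = f_a K^b. -/
def ParallelRays (K : Pt n → Pt n) (f : Pt n → Fin n → ℝ) : Prop :=
  ∀ x a b, G.covVec K a b x = f x a * K x b

/-- first (ℝ-) component of the tractor derivative of the tractor (ρ, X, σ):
∇_a ρ − P_{ab} X^b. -/
def trD0 (ρ : Pt n → ℝ) (X : Pt n → Pt n) (a : Fin n) (x : Pt n) : ℝ :=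
  pd a ρ x - ∑ b, G.Schouten a b x * X x b

/-- middle (TM-) component of the tractor derivative of the tractor (ρ, X, σ):
∇_a X^b + ρ δ_a{}^b + σ P_a{}^b. -/
def trD1 (ρ : Pt n → ℝ) (X : Pt n → Pt n) (σ : Pt n → ℝ) (a b : Fin n) (x : Pt n) : ℝ :=
  G.covVec X a b x + ρ x * (if a = b then (1:ℝ) else 0)
    + σ x * ∑ e, G.ginv x b e * G.Schouten a e x

/-- last (ℝ-) component of the tractor derivative of the tractor (ρ, X, σ):
∇_a σ − g_{ab} X^b. -/
def trD2 (X : Pt n → Pt n) (σ : Pt n → ℝ) (a : Fin n) (x : Pt n) : ℝ :=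
  pd a σ x - ∑ b, G.g x a b * X x b

end MetricG

/-! ### Partial derivatives -/

lemma pd_add {n : ℕ} (a : Fin n) {f g : Pt n → ℝ} {x : Pt n} (hf : ContDiff ℝ (⊤ : ℕ∞) f)
    (hg : ContDiff ℝ (⊤ : ℕ∞) g) : pd a (fun y => f y + g y) x = pd a f x + pd a g x := by
  have h1 := (hf.differentiable (by simp)) x
  have h2 := (hg.differentiable (by simp)) x
  unfold pd
  rw [fderiv_fun_add h1 h2]; simp

lemma pd_sub {n : ℕ} (a : Fin n) {f g : Pt n → ℝ} {x : Pt n} (hf : ContDiff ℝ (⊤ : ℕ∞) f)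
    (hg : ContDiff ℝ (⊤ : ℕ∞) g) : pd a (fun y => f y - g y) x = pd a f x - pd a g x := by
  have h1 := (hf.differentiable (by simp)) x
  have h2 := (hg.differentiable (by simp)) x
  unfold pd
  rw [fderiv_fun_sub h1 h2]; simp

lemma pd_mul {n : ℕ} (a : Fin n) {f g : Pt n → ℝ} {x : Pt n} (hf : ContDiff ℝ (⊤ : ℕ∞) f)
    (hg : ContDiff ℝ (⊤ : ℕ∞) g) :
    pd a (fun y => f y * g y) x = pd a f x * g x + f x * pd a g x := by
  have h1 := (hf.differentiable (by simp)) x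
  have h2 := (hg.differentiable (by simp)) x
  unfold pd
  rw [fderiv_fun_mul h1 h2]; simp; ring

lemma pd_const {n : ℕ} (a : Fin n) (r : ℝ) {x : Pt n} : pd a (fun _ => r) x = 0 := by
  unfold pd; simp

lemma pd_const_mul {n : ℕ} (a : Fin n) (r : ℝ) {g : Pt n → ℝ} {x : Pt n}
    (hg : ContDiff ℝ (⊤ : ℕ∞) g) :
    pd a (fun y => r * g y) x = r * pd a g x := by
  rw [pd_mul a contDiff_const hg, pd_const]; ring

lemma pd_sum {n : ℕ} {ι : Type*} (s : Finset ι) (a : Fin n) {f : ι → Pt n → ℝ} {x : Pt n}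
    (hf : ∀ i, ContDiff ℝ (⊤ : ℕ∞) (f i)) :
    pd a (fun y => ∑ i ∈ s, f i y) x = ∑ i ∈ s, pd a (f i) x := by
  unfold pd
  rw [fderiv_fun_sum (fun i _ => ((hf i).differentiable (by simp)) x)]; simp

lemma pd_exp {n : ℕ} (a : Fin n) {f : Pt n → ℝ} {x : Pt n} (hf : ContDiff ℝ (⊤ : ℕ∞) f) :
    pd a (fun y => Real.exp (2 * f y)) x = 2 * Real.exp (2 * f x) * pd a f x := by
  have h1 := (hf.differentiable (by simp)) x
  unfold pd
  rw [fderiv_exp (h1.const_mul 2), fderiv_const_mul h1]; simp; ring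

@[fun_prop]
lemma pd_smooth {n : ℕ} (a : Fin n) {f : Pt n → ℝ} (hf : ContDiff ℝ (⊤ : ℕ∞) f) :
    ContDiff ℝ (⊤ : ℕ∞) (fun x => pd a f x) := by
  unfold pd
  exact (hf.fderiv_right (m := (⊤ : ℕ∞)) (by simp)).clm_apply contDiff_const

lemma pd_comm {n : ℕ} (a b : Fin n) {f : Pt n → ℝ} {x : Pt n} (hf : ContDiff ℝ (⊤ : ℕ∞) f) :
    pd a (fun y => pd b f y) x = pd b (fun y => pd a f y) x := by
  have hs : IsSymmSndFDerivAt ℝ f x := by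
    apply ContDiffAt.isSymmSndFDerivAt (n := (⊤ : ℕ∞)) hf.contDiffAt
    rw [minSmoothness_of_isRCLikeNormedField]
    exact WithTop.coe_le_coe.2 le_top
  have hd : DifferentiableAt ℝ (fderiv ℝ f) x :=
    ((hf.fderiv_right (m := (⊤ : ℕ∞)) (by simp)).differentiable (by simp)) x
  have key : ∀ a b : Fin n, pd a (fun y => pd b f y) x
      = fderiv ℝ (fderiv ℝ f) x (Pi.single a 1) (Pi.single b 1) := by
    intro a b
    unfold pd
    rw [fderiv_clm_apply hd (by fun_prop)]
    simp
  rw [key, key]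
  exact hs _ _

namespace MetricG

variable {n : ℕ} (G : MetricG n)

/-! ### Inverse metric -/

lemma mat_inv (x : Pt n) : (Matrix.of (G.ginv x)) * (Matrix.of (G.g x)) = 1 := by
  ext a c
  simp [Matrix.mul_apply, G.inv_mul, Matrix.one_apply]

lemma mul_inv (x : Pt n) (a c : Fin n) :
    (∑ b, G.g x a b * G.ginv x b c) = if a = c then (1:ℝ) else 0 := by
  have h := mul_eq_one_comm.1 (G.mat_inv x)
  have := congrFun (congrFun h a) c
  simpa [Matrix.mul_apply, Matrix.one_apply] using this

lemma ginv_unique (x : Pt n) (M : Fin n → Fin n → ℝ)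
    (hM : ∀ a c, (∑ b, M a b * G.g x b c) = if a = c then (1:ℝ) else 0) (a b : Fin n) :
    M a b = G.ginv x a b := by
  have h1 : Matrix.of M * Matrix.of (G.g x) = 1 := by
    ext a c
    simp [Matrix.mul_apply, hM, Matrix.one_apply]
  have h2 := mul_eq_one_comm.1 (G.mat_inv x)
  have : Matrix.of M = Matrix.of (G.ginv x) := left_inv_eq_right_inv h1 h2
  exact congrFun (congrFun this a) b

lemma ginv_symm (x : Pt n) (a b : Fin n) : G.ginv x a b = G.ginv x b a := by
  refine (G.ginv_unique x (fun a b => G.ginv x b a) ?_ a b).symm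
  intro a c
  have := G.mul_inv x c a
  simp only [eq_comm (a := a)]
  rw [← this]
  refine Finset.sum_congr rfl fun b _ => ?_
  rw [G.symm x b c]; ring

lemma ginv_smooth (a b : Fin n) : ContDiff ℝ (⊤ : ℕ∞) (fun x => G.ginv x a b) := by
  have hdet : ∀ M : Pt n → Matrix (Fin n) (Fin n) ℝ,
      (∀ i j, ContDiff ℝ (⊤ : ℕ∞) (fun x => M x i j)) →
      ContDiff ℝ (⊤ : ℕ∞) (fun x => (M x).det) := by
    intro M hM
    simp only [Matrix.det_apply]
    refine ContDiff.sum fun σ _ => ?_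
    exact (contDiff_prod fun i _ => hM _ _).const_smul _
  have h0 : ∀ x, (Matrix.of (G.g x)).det ≠ 0 := by
    intro x
    have := congrArg Matrix.det (G.mat_inv x)
    rw [Matrix.det_mul, Matrix.det_one] at this
    exact right_ne_zero_of_mul_eq_one this
  have h1 : ∀ x, G.ginv x a b
      = ((Matrix.of (G.g x)).det)⁻¹ * (Matrix.of (G.g x)).adjugate a b := by
    intro x
    have h : Matrix.of (G.ginv x) = (Matrix.of (G.g x))⁻¹ :=
      (Matrix.inv_eq_left_inv (G.mat_inv x)).symm
    have := congrFun (congrFun h a) b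
    rw [Matrix.inv_def] at this
    simpa using this
  simp only [h1]
  refine ContDiff.mul (ContDiff.inv (hdet _ fun i j => G.smooth i j) h0) ?_
  simp only [Matrix.adjugate_apply]
  refine hdet _ fun i j => ?_
  by_cases h : i = b
  · subst h; simp only [Matrix.updateRow_self]; exact contDiff_const
  · simp only [Matrix.updateRow_ne h]; exact G.smooth i j

/-! ### The induced inner product on covectors -/

/-- inner product of covectors -/
def Q (x : Pt n) (u v : Fin n → ℝ) : ℝ := ∑ e, ∑ f, G.ginv x e f * u e * v f

lemma Q_symm (x : Pt n) (u v : Fin n → ℝ) : G.Q x u v = G.Q x v u := by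
  unfold Q
  rw [Finset.sum_comm]
  refine Finset.sum_congr rfl fun e _ => Finset.sum_congr rfl fun f _ => ?_
  rw [G.ginv_symm x f e]; ring

lemma Q_add_right (x : Pt n) (u v w : Fin n → ℝ) :
    G.Q x u (fun e => v e + w e) = G.Q x u v + G.Q x u w := by
  simp only [Q, mul_add, Finset.sum_add_distrib]

lemma Q_sub_right (x : Pt n) (u v w : Fin n → ℝ) :
    G.Q x u (fun e => v e - w e) = G.Q x u v - G.Q x u w := by
  simp only [Q, mul_sub, Finset.sum_sub_distrib]

lemma Q_mul_right (x : Pt n) (u v : Fin n → ℝ) (r : ℝ) :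
    G.Q x u (fun e => r * v e) = r * G.Q x u v := by
  simp only [Q, Finset.mul_sum]
  refine Finset.sum_congr rfl fun e _ => Finset.sum_congr rfl fun f _ => ?_
  ring

lemma Q_mul_right' (x : Pt n) (u v : Fin n → ℝ) (r : ℝ) :
    G.Q x u (fun e => v e * r) = r * G.Q x u v := by
  rw [← Q_mul_right]; simp only [mul_comm]

lemma Q_add_left (x : Pt n) (u v w : Fin n → ℝ) :
    G.Q x (fun e => v e + w e) u = G.Q x v u + G.Q x w u := by
  simp only [G.Q_symm x _ u, Q_add_right]

lemma Q_sub_left (x : Pt n) (u v w : Fin n → ℝ) :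
    G.Q x (fun e => v e - w e) u = G.Q x v u - G.Q x w u := by
  simp only [G.Q_symm x _ u, Q_sub_right]

lemma Q_mul_left (x : Pt n) (u v : Fin n → ℝ) (r : ℝ) :
    G.Q x (fun e => r * v e) u = r * G.Q x v u := by
  simp only [G.Q_symm x _ u, Q_mul_right]

lemma Q_mul_left' (x : Pt n) (u v : Fin n → ℝ) (r : ℝ) :
    G.Q x (fun e => v e * r) u = r * G.Q x v u := by
  simp only [G.Q_symm x _ u, Q_mul_right']

lemma Q_g_right (x : Pt n) (u : Fin n → ℝ) (a : Fin n) :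
    G.Q x u (fun e => G.g x e a) = u a := by
  unfold Q
  have : ∀ e, (∑ f, G.ginv x e f * u e * G.g x f a) = if e = a then u e else 0 := by
    intro e
    have h := G.inv_mul x e a
    have h2 : (∑ f, G.ginv x e f * u e * G.g x f a) = u e * ∑ f, G.ginv x e f * G.g x f a := by
      rw [Finset.mul_sum]; exact Finset.sum_congr rfl fun f _ => by ring
    rw [h2, h]; simp
  simp only [this]; simp

lemma Q_g_left (x : Pt n) (u : Fin n → ℝ) (a : Fin n) :
    G.Q x (fun e => G.g x e a) u = u a := by
  rw [Q_symm, Q_g_right]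

lemma Q_g_right' (x : Pt n) (u : Fin n → ℝ) (a : Fin n) :
    G.Q x u (fun e => G.g x a e) = u a := by
  simp only [G.symm x a, Q_g_right]

lemma Q_g_left' (x : Pt n) (u : Fin n → ℝ) (a : Fin n) :
    G.Q x (fun e => G.g x a e) u = u a := by
  rw [Q_symm, Q_g_right']

/-! ### Christoffel symbols of the first kind -/

/-- Christoffel symbols of the first kind -/
def L (c a b : Fin n) (x : Pt n) : ℝ :=
  (1/2) * (pd a (fun y => G.g y c b) x + pd b (fun y => G.g y c a) x - pd c (fun y => G.g y a b) x)

lemma L_symm (c a b : Fin n) (x : Pt n) : G.L c a b x = G.L c b a x := by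
  have : (fun y => G.g y a b) = fun y => G.g y b a := by ext y; exact G.symm y a b
  unfold L; rw [this]; ring

lemma pd_g (a c b : Fin n) (x : Pt n) :
    pd a (fun y => G.g y c b) x = G.L c a b x + G.L b a c x := by
  have h1 : (fun y => G.g y b c) = fun y => G.g y c b := by ext y; exact G.symm y b c
  have h2 : (fun y => G.g y a b) = fun y => G.g y b a := by ext y; exact G.symm y a b
  have h3 : (fun y => G.g y a c) = fun y => G.g y c a := by ext y; exact G.symm y a c
  unfold L; rw [h1, h2, h3]; ring

@[fun_prop]
lemma g_smooth (a b : Fin n) : ContDiff ℝ (⊤ : ℕ∞) (fun x => G.g x a b) := G.smooth a b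

@[fun_prop]
lemma ginv_smooth' (a b : Fin n) : ContDiff ℝ (⊤ : ℕ∞) (fun x => G.ginv x a b) := G.ginv_smooth a b

@[fun_prop]
lemma L_smooth (c a b : Fin n) : ContDiff ℝ (⊤ : ℕ∞) (fun x => G.L c a b x) := by
  unfold L; fun_prop

lemma Γ_eq (c a b : Fin n) (x : Pt n) : G.Γ c a b x = ∑ d, G.ginv x c d * G.L d a b x := by
  unfold Γ L
  rw [Finset.mul_sum]; exact Finset.sum_congr rfl fun d _ => by ring

lemma Γ_symm (c a b : Fin n) (x : Pt n) : G.Γ c a b x = G.Γ c b a x := by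
  simp only [Γ_eq, G.L_symm _ a b]

@[fun_prop]
lemma Γ_smooth (c a b : Fin n) : ContDiff ℝ (⊤ : ℕ∞) (fun x => G.Γ c a b x) := by
  simp only [Γ_eq]; fun_prop

lemma sum_Γ_mul (a b : Fin n) (x : Pt n) (u : Fin n → ℝ) :
    (∑ e, G.Γ e a b x * u e) = G.Q x (fun e => G.L e a b x) u := by
  rw [Q_symm]
  unfold Q
  simp only [Γ_eq, Finset.sum_mul]
  exact Finset.sum_congr rfl fun d _ => Finset.sum_congr rfl fun e _ => by ring

lemma sum_g_Γ (c a b : Fin n) (x : Pt n) :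
    (∑ e, G.g x c e * G.Γ e a b x) = G.L c a b x := by
  have := G.sum_Γ_mul a b x (fun e => G.g x c e)
  rw [Q_g_right'] at this
  rw [← this]
  exact Finset.sum_congr rfl fun d _ => by ring

@[fun_prop]
lemma Riem_smooth (a b c d : Fin n) : ContDiff ℝ (⊤ : ℕ∞) (fun x => G.Riem a b c d x) := by
  unfold Riem; fun_prop

@[fun_prop]
lemma Ricci_smooth (a b : Fin n) : ContDiff ℝ (⊤ : ℕ∞) (fun x => G.Ricci a b x) := by
  unfold Ricci; fun_prop

@[fun_prop]
lemma Scal_smooth : ContDiff ℝ (⊤ : ℕ∞) (fun x => G.Scal x) := by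
  unfold Scal; fun_prop

@[fun_prop]
lemma Schouten_smooth (a b : Fin n) : ContDiff ℝ (⊤ : ℕ∞) (fun x => G.Schouten a b x) := by
  unfold Schouten; fun_prop

lemma Riem4_eq (a b c d : Fin n) (x : Pt n) :
    G.Riem4 a b c d x = pd a (fun y => G.L c b d y) x - pd b (fun y => G.L c a d y) x
      - G.Q x (fun e => G.L e a c x) (fun e => G.L e b d x)
      + G.Q x (fun e => G.L e b c x) (fun e => G.L e a d x) := by
  have key : ∀ a b : Fin n, (∑ e, G.g x c e * pd a (fun y => G.Γ e b d y) x)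
      = pd a (fun y => G.L c b d y) x
        - ∑ e, (G.L c a e x + G.L e a c x) * G.Γ e b d x := by
    intro a b
    have h : (fun y => G.L c b d y) = fun y => ∑ e, G.g y c e * G.Γ e b d y := by
      ext y; rw [sum_g_Γ]
    rw [h, pd_sum _ _ (fun e => by fun_prop), ← Finset.sum_sub_distrib]
    refine Finset.sum_congr rfl fun e _ => ?_
    rw [pd_mul a (by fun_prop) (by fun_prop), pd_g]; ring
  have key2 : ∀ a b : Fin n, (∑ e, G.g x c e * ∑ f, G.Γ e a f x * G.Γ f b d x)
      = ∑ f, G.L c a f x * G.Γ f b d x := by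
    intro a b
    simp only [← G.sum_g_Γ c a _ x, Finset.mul_sum, Finset.sum_mul]
    rw [Finset.sum_comm]
    exact Finset.sum_congr rfl fun d _ => Finset.sum_congr rfl fun e _ => by ring
  have key3 : ∀ a b : Fin n, (∑ e, (G.L c a e x + G.L e a c x) * G.Γ e b d x)
      = (∑ f, G.L c a f x * G.Γ f b d x)
        + G.Q x (fun e => G.L e a c x) (fun e => G.L e b d x) := by
    intro a b
    rw [Q_symm, ← sum_Γ_mul, ← Finset.sum_add_distrib]
    exact Finset.sum_congr rfl fun d _ => by ring
  unfold Riem4 Riem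
  simp only [mul_add, mul_sub, Finset.sum_add_distrib, Finset.sum_sub_distrib]
  rw [key, key, key2, key2, key3, key3]; ring

lemma Riem_eq (a b c d : Fin n) (x : Pt n) :
    G.Riem a b c d x = ∑ e, G.ginv x c e * G.Riem4 a b e d x := by
  unfold Riem4
  simp only [Finset.mul_sum]
  rw [Finset.sum_comm]
  have : ∀ f, (∑ e, G.ginv x c e * (G.g x e f * G.Riem a b f d x))
      = if c = f then G.Riem a b f d x else 0 := by
    intro f
    simp only [← mul_assoc, ← Finset.sum_mul, G.inv_mul]; simp
  simp only [this]; simp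

lemma Ricci_eq (b d : Fin n) (x : Pt n) :
    G.Ricci b d x = ∑ c, ∑ e, G.ginv x c e * G.Riem4 c b e d x := by
  unfold Ricci; simp only [Riem_eq]

lemma Riem4_anti (a b c d : Fin n) (x : Pt n) : G.Riem4 b a c d x = - G.Riem4 a b c d x := by
  simp only [Riem4_eq]; ring

lemma pd_L (a c b d : Fin n) (x : Pt n) : pd a (fun y => G.L c b d y) x =
    (1/2) * (pd a (fun y => pd b (fun z => G.g z c d) y) x
      + pd a (fun y => pd d (fun z => G.g z c b) y) x
      - pd a (fun y => pd c (fun z => G.g z b d) y) x) := by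
  unfold L
  rw [pd_const_mul _ _ (by fun_prop), pd_sub _ (by fun_prop) (by fun_prop),
    pd_add _ (by fun_prop) (by fun_prop)]

lemma Riem4_anti' (a b c d : Fin n) (x : Pt n) : G.Riem4 a b d c x = - G.Riem4 a b c d x := by
  have hs : ∀ a b, (fun z => G.g z a b) = (fun z => G.g z b a) := fun a b => by
    ext z; exact G.symm z a b
  simp only [Riem4_eq, pd_L]
  rw [hs d c, pd_comm a b (G.smooth c d), G.Q_symm x (fun e => G.L e a d x),
    G.Q_symm x (fun e => G.L e b d x), hs b c, hs a c, hs b d, hs a d]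
  ring

lemma Riem4_pair (a b c d : Fin n) (x : Pt n) : G.Riem4 c d a b x = G.Riem4 a b c d x := by
  have hs : ∀ a b, (fun z => G.g z a b) = (fun z => G.g z b a) := fun a b => by
    ext z; exact G.symm z a b
  simp only [Riem4_eq, pd_L]
  simp only [G.L_symm _ c a, G.L_symm _ d b, G.L_symm _ d a, G.L_symm _ c b]
  rw [G.Q_symm x (fun e => G.L e a d x)]
  rw [hs a b, hs c d, hs d b, hs c a, hs a d, hs c b]
  rw [pd_comm c d (G.smooth b a), pd_comm a b (G.smooth d c)]
  rw [pd_comm c b (G.smooth _ _), pd_comm c a (G.smooth _ _), pd_comm d b (G.smooth _ _),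
    pd_comm d a (G.smooth _ _)]
  ring

lemma Ricci_symm (b d : Fin n) (x : Pt n) : G.Ricci b d x = G.Ricci d b x := by
  rw [Ricci_eq, Ricci_eq, Finset.sum_comm]
  refine Finset.sum_congr rfl fun e _ => Finset.sum_congr rfl fun f _ => ?_
  rw [G.Riem4_pair e d f b, G.ginv_symm x f e]

lemma Schouten_symm (b d : Fin n) (x : Pt n) : G.Schouten b d x = G.Schouten d b x := by
  unfold Schouten; rw [Ricci_symm, G.symm x b d]

end MetricG

/-! ### Conformal change -/

namespace MetricG

variable {n : ℕ}

/-- The change of the Schouten tensor. -/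
def Bt (G : MetricG n) (Υ : Pt n → ℝ) (a b : Fin n) (x : Pt n) : ℝ :=
  - G.cov1 (fun y i => pd i Υ y) a b x + pd a Υ x * pd b Υ x
    - (1/2) * G.Q x (fun e => pd e Υ x) (fun e => pd e Υ x) * G.g x a b

lemma cov1_eq (G : MetricG n) (Υ : Pt n → ℝ) (a b : Fin n) (x : Pt n) :
    G.cov1 (fun y i => pd i Υ y) a b x = pd a (fun y => pd b Υ y) x
      - G.Q x (fun e => G.L e a b x) (fun e => pd e Υ x) := by
  unfold cov1; rw [sum_Γ_mul]

lemma cov1_symm (G : MetricG n) (Υ : Pt n → ℝ) (hΥ : ContDiff ℝ (⊤ : ℕ∞) Υ) (a b : Fin n)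
    (x : Pt n) :
    G.cov1 (fun y i => pd i Υ y) a b x = G.cov1 (fun y i => pd i Υ y) b a x := by
  rw [cov1_eq, cov1_eq, pd_comm a b hΥ]; simp only [G.L_symm _ a b]

lemma Bt_symm (G : MetricG n) (Υ : Pt n → ℝ) (hΥ : ContDiff ℝ (⊤ : ℕ∞) Υ) (a b : Fin n)
    (x : Pt n) : G.Bt Υ a b x = G.Bt Υ b a x := by
  unfold Bt; rw [cov1_symm G Υ hΥ a b, G.symm x a b]; ring

section conf

variable (G Ghat : MetricG n) (Υ : Pt n → ℝ)

lemma ginv_hat (hconf : ∀ x a b, Ghat.g x a b = Real.exp (2 * Υ x) * G.g x a b)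
    (x : Pt n) (a b : Fin n) :
    Ghat.ginv x a b = (Real.exp (2 * Υ x))⁻¹ * G.ginv x a b := by
  refine (Ghat.ginv_unique x (fun a b => (Real.exp (2 * Υ x))⁻¹ * G.ginv x a b) ?_ a b).symm
  intro a c
  rw [← G.inv_mul x a c]
  refine Finset.sum_congr rfl fun b _ => ?_
  rw [hconf]
  have := Real.exp_ne_zero (2 * Υ x)
  field_simp

lemma Q_hat (hconf : ∀ x a b, Ghat.g x a b = Real.exp (2 * Υ x) * G.g x a b)
    (x : Pt n) (u v : Fin n → ℝ) :
    Ghat.Q x u v = (Real.exp (2 * Υ x))⁻¹ * G.Q x u v := by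
  unfold Q
  simp only [ginv_hat G Ghat Υ hconf, Finset.mul_sum, mul_assoc]


lemma L_hat
    (hΥ : ContDiff ℝ (⊤ : ℕ∞) Υ)
    (hconf : ∀ x a b, Ghat.g x a b = Real.exp (2 * Υ x) * G.g x a b)
    (c a b : Fin n) (x : Pt n) :
    Ghat.L c a b x = Real.exp (2 * Υ x) * (G.L c a b x + G.g x c a * pd b Υ x
      + G.g x c b * pd a Υ x - G.g x a b * pd c Υ x) := by
  have hE : ContDiff ℝ (⊤ : ℕ∞) (fun y => Real.exp (2 * Υ y)) := by fun_prop
  unfold L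
  simp only [hconf]
  rw [pd_mul a hE (G.smooth _ _), pd_mul b hE (G.smooth _ _), pd_mul c hE (G.smooth _ _),
    pd_exp _ hΥ, pd_exp _ hΥ, pd_exp _ hΥ]
  ring

lemma pd_L_hat
    (hΥ : ContDiff ℝ (⊤ : ℕ∞) Υ)
    (hconf : ∀ x a b, Ghat.g x a b = Real.exp (2 * Υ x) * G.g x a b)
    (a c b d : Fin n) (x : Pt n) :
    pd a (fun y => Ghat.L c b d y) x = Real.exp (2 * Υ x) * (
      2 * pd a Υ x * (G.L c b d x + G.g x c b * pd d Υ x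
        + G.g x c d * pd b Υ x - G.g x b d * pd c Υ x)
      + (pd a (fun y => G.L c b d y) x
        + ((G.L c a b x + G.L b a c x) * pd d Υ x + G.g x c b * pd a (fun y => pd d Υ y) x)
        + ((G.L c a d x + G.L d a c x) * pd b Υ x + G.g x c d * pd a (fun y => pd b Υ y) x)
        - ((G.L b a d x + G.L d a b x) * pd c Υ x + G.g x b d * pd a (fun y => pd c Υ y) x))) := by
  simp only [L_hat G Ghat Υ hΥ hconf]
  rw [pd_mul a (by fun_prop) (by fun_prop), pd_exp _ hΥ,
    pd_sub a (by fun_prop) (by fun_prop), pd_add a (by fun_prop) (by fun_prop),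
    pd_add a (by fun_prop) (by fun_prop), pd_mul a (by fun_prop) (by fun_prop),
    pd_mul a (by fun_prop) (by fun_prop), pd_mul a (by fun_prop) (by fun_prop),
    pd_g, pd_g, pd_g]
  ring

lemma Q_L_hat
    (hΥ : ContDiff ℝ (⊤ : ℕ∞) Υ)
    (hconf : ∀ x a b, Ghat.g x a b = Real.exp (2 * Υ x) * G.g x a b)
    (a c b d : Fin n) (x : Pt n) :
    Ghat.Q x (fun e => Ghat.L e a c x) (fun e => Ghat.L e b d x) = Real.exp (2 * Υ x) *
     G.Q x (fun e => G.L e a c x + G.g x e a * pd c Υ x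
        + G.g x e c * pd a Υ x - G.g x a c * pd e Υ x)
      (fun e => G.L e b d x + G.g x e b * pd d Υ x
        + G.g x e d * pd b Υ x - G.g x b d * pd e Υ x) := by
  simp only [L_hat G Ghat Υ hΥ hconf, Q_hat G Ghat Υ hconf, Q_mul_right, Q_mul_left]
  have := Real.exp_ne_zero (2 * Υ x)
  exact inv_mul_cancel_left₀ this _

lemma Riem4_hat
    (hΥ : ContDiff ℝ (⊤ : ℕ∞) Υ)
    (hconf : ∀ x a b, Ghat.g x a b = Real.exp (2 * Υ x) * G.g x a b)
    (a b c d : Fin n) (x : Pt n) :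
    Ghat.Riem4 a b c d x = Real.exp (2 * Υ x) * (G.Riem4 a b c d x
      + (G.g x c a * G.Bt Υ b d x - G.g x c b * G.Bt Υ a d x
      + G.g x d b * G.Bt Υ a c x - G.g x d a * G.Bt Υ b c x)) := by
  rw [Riem4_eq, Q_L_hat G Ghat Υ hΥ hconf, Q_L_hat G Ghat Υ hΥ hconf,
    pd_L_hat G Ghat Υ hΥ hconf, pd_L_hat G Ghat Υ hΥ hconf, Riem4_eq]
  simp only [Q_add_right, Q_sub_right, Q_add_left, Q_sub_left, Q_mul_right, Q_mul_left,
    Q_mul_right', Q_mul_left', Q_g_right, Q_g_left, Bt, cov1_eq]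
  simp only [G.Q_symm x (fun e => pd e Υ x) (fun e => G.L e _ _ x)]
  rw [pd_comm b a hΥ]
  rw [G.symm x a c, G.symm x b c, G.symm x a d, G.symm x b d, G.symm x c d, G.symm x b a]
  simp only [G.L_symm _ b a]
  ring

/-- The trace of `Bt`. -/
def trB (G : MetricG n) (Υ : Pt n → ℝ) (x : Pt n) : ℝ :=
  ∑ a, ∑ b, G.ginv x a b * G.Bt Υ a b x

lemma tr_g (x : Pt n) : (∑ a, ∑ b, G.ginv x a b * G.g x a b) = n := by
  have : ∀ a, (∑ b, G.ginv x a b * G.g x a b) = 1 := by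
    intro a
    have := G.inv_mul x a a
    rw [if_pos rfl] at this
    rw [← this]
    exact Finset.sum_congr rfl fun b _ => by rw [G.symm x a b]
  simp [this]

lemma Ricci_hat
    (hΥ : ContDiff ℝ (⊤ : ℕ∞) Υ)
    (hconf : ∀ x a b, Ghat.g x a b = Real.exp (2 * Υ x) * G.g x a b)
    (b d : Fin n) (x : Pt n) :
    Ghat.Ricci b d x = G.Ricci b d x + ((n : ℝ) - 2) * G.Bt Υ b d x
      + G.g x b d * G.trB Υ x := by
  have hE := Real.exp_ne_zero (2 * Υ x)
  have h1 : Ghat.Ricci b d x = ∑ c, ∑ e, (G.ginv x c e * G.Riem4 c b e d x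
      + G.Bt Υ b d x * (G.ginv x c e * G.g x c e)
      - G.ginv x c e * G.Bt Υ c d x * G.g x e b
      + G.g x b d * (G.ginv x c e * G.Bt Υ c e x)
      - G.ginv x c e * G.g x c d * G.Bt Υ b e x) := by
    rw [Ricci_eq]
    refine Finset.sum_congr rfl fun c _ => Finset.sum_congr rfl fun e _ => ?_
    rw [Riem4_hat G Ghat Υ hΥ hconf, ginv_hat G Ghat Υ hconf, G.symm x e c, G.symm x d b,
      G.symm x d c]
    field_simp
    ring
  rw [h1]
  simp only [Finset.sum_add_distrib, Finset.sum_sub_distrib, ← Finset.mul_sum]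
  have h2 := G.Q_g_right x (fun c => G.Bt Υ c d x) b
  have h3 := G.Q_g_left x (fun c => G.Bt Υ b c x) d
  unfold Q at h2 h3
  rw [h2, h3, ← Ricci_eq, tr_g, trB]
  ring

lemma Scal_hat
    (hΥ : ContDiff ℝ (⊤ : ℕ∞) Υ)
    (hconf : ∀ x a b, Ghat.g x a b = Real.exp (2 * Υ x) * G.g x a b)
    (x : Pt n) :
    Ghat.Scal x = (Real.exp (2 * Υ x))⁻¹ * (G.Scal x + 2 * ((n : ℝ) - 1) * G.trB Υ x) := by
  have h1 : Ghat.Scal x = ∑ a, ∑ b, ((Real.exp (2 * Υ x))⁻¹ * (G.ginv x a b * G.Ricci a b x)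
      + (Real.exp (2 * Υ x))⁻¹ * ((n : ℝ) - 2) * (G.ginv x a b * G.Bt Υ a b x)
      + (Real.exp (2 * Υ x))⁻¹ * G.trB Υ x * (G.ginv x a b * G.g x a b)) := by
    unfold Scal
    refine Finset.sum_congr rfl fun c _ => Finset.sum_congr rfl fun e _ => ?_
    rw [Ricci_hat G Ghat Υ hΥ hconf, ginv_hat G Ghat Υ hconf]
    ring
  rw [h1]
  simp only [Finset.sum_add_distrib, ← Finset.mul_sum]
  rw [tr_g, ← trB, ← Scal]
  ring

lemma Schouten_hat (hn : 4 ≤ n)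
    (hΥ : ContDiff ℝ (⊤ : ℕ∞) Υ)
    (hconf : ∀ x a b, Ghat.g x a b = Real.exp (2 * Υ x) * G.g x a b)
    (b d : Fin n) (x : Pt n) :
    Ghat.Schouten b d x = G.Schouten b d x + G.Bt Υ b d x := by
  have hE := Real.exp_ne_zero (2 * Υ x)
  have hn' : (4 : ℝ) ≤ n := by exact_mod_cast hn
  have h1 : (n : ℝ) - 2 ≠ 0 := by linarith
  have h2 : (n : ℝ) - 1 ≠ 0 := by linarith
  unfold Schouten
  rw [Ricci_hat G Ghat Υ hΥ hconf, Scal_hat G Ghat Υ hΥ hconf, hconf]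
  field_simp
  ring

lemma Weyl_hat (hn : 4 ≤ n)
    (hΥ : ContDiff ℝ (⊤ : ℕ∞) Υ)
    (hconf : ∀ x a b, Ghat.g x a b = Real.exp (2 * Υ x) * G.g x a b)
    (a b c d : Fin n) (x : Pt n) :
    Ghat.Weyl a b c d x = Real.exp (2 * Υ x) * G.Weyl a b c d x := by
  unfold Weyl
  simp only [Schouten_hat G Ghat Υ hn hΥ hconf, Riem4_hat G Ghat Υ hΥ hconf, hconf]
  ring

/-! ### Cotton tensor -/

/-- The covariant curl of a (0,2)-tensor. -/
def curl (G : MetricG n) (T : Fin n → Fin n → Pt n → ℝ) (a b c : Fin n) (x : Pt n) : ℝ :=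
  (pd b (fun y => T c a y) x - ∑ e, G.Γ e b a x * T c e x)
    - (pd c (fun y => T b a y) x - ∑ e, G.Γ e c a x * T b e x)

lemma Cotton_eq (a b c : Fin n) (x : Pt n) :
    G.Cotton a b c x = G.curl (fun i j y => G.Schouten i j y) a b c x := by
  unfold Cotton cov2 curl
  simp only [G.Γ_symm _ c b]
  ring

lemma curl_hat
    (hΥ : ContDiff ℝ (⊤ : ℕ∞) Υ)
    (hconf : ∀ x a b, Ghat.g x a b = Real.exp (2 * Υ x) * G.g x a b)
    (T : Fin n → Fin n → Pt n → ℝ) (hT : ∀ i j x, T i j x = T j i x)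
    (a b c : Fin n) (x : Pt n) :
    Ghat.curl T a b c x = G.curl T a b c x
      - (T c a x * pd b Υ x - G.g x a b * G.Q x (fun e => pd e Υ x) (fun e => T c e x))
      + (T b a x * pd c Υ x - G.g x a c * G.Q x (fun e => pd e Υ x) (fun e => T b e x)) := by
  have hE := Real.exp_ne_zero (2 * Υ x)
  unfold curl
  simp only [sum_Γ_mul, L_hat G Ghat Υ hΥ hconf, Q_hat G Ghat Υ hconf, Q_mul_left,
    inv_mul_cancel_left₀ hE]
  simp only [Q_add_left, Q_sub_left, Q_mul_left, Q_mul_left', Q_g_left]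
  rw [hT c b, G.symm x b a, G.symm x c a]
  ring

lemma curl_add (T S : Fin n → Fin n → Pt n → ℝ)
    (hT : ∀ i j, ContDiff ℝ (⊤ : ℕ∞) (T i j)) (hS : ∀ i j, ContDiff ℝ (⊤ : ℕ∞) (S i j))
    (a b c : Fin n) (x : Pt n) :
    G.curl (fun i j y => T i j y + S i j y) a b c x = G.curl T a b c x + G.curl S a b c x := by
  unfold curl
  rw [pd_add _ (hT _ _) (hS _ _), pd_add _ (hT _ _) (hS _ _)]
  simp only [mul_add, Finset.sum_add_distrib]
  ring

lemma curl_sub (T S : Fin n → Fin n → Pt n → ℝ)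
    (hT : ∀ i j, ContDiff ℝ (⊤ : ℕ∞) (T i j)) (hS : ∀ i j, ContDiff ℝ (⊤ : ℕ∞) (S i j))
    (a b c : Fin n) (x : Pt n) :
    G.curl (fun i j y => T i j y - S i j y) a b c x = G.curl T a b c x - G.curl S a b c x := by
  unfold curl
  rw [pd_sub _ (hT _ _) (hS _ _), pd_sub _ (hT _ _) (hS _ _)]
  simp only [mul_sub, Finset.sum_sub_distrib]
  ring

/-- Ricci identity. -/
lemma curl_hess (hΥ : ContDiff ℝ (⊤ : ℕ∞) Υ) (a b c : Fin n) (x : Pt n) :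
    G.curl (fun i j y => G.cov1 (fun y i => pd i Υ y) i j y) a b c x
      = - ∑ e, G.Riem b c e a x * pd e Υ x := by
  have key : ∀ b c, pd b (fun y => G.cov1 (fun y i => pd i Υ y) c a y) x
      = pd b (fun y => pd c (fun z => pd a Υ z) y) x
        - ∑ e, pd b (fun y => G.Γ e c a y) x * pd e Υ x
        - ∑ e, G.Γ e c a x * pd b (fun y => pd e Υ y) x := by
    intro b c
    unfold cov1
    rw [pd_sub _ (by fun_prop) (by fun_prop), pd_sum _ _ (fun e => by fun_prop)]
    rw [sub_sub, ← Finset.sum_add_distrib]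
    congr 1
    refine Finset.sum_congr rfl fun e _ => ?_
    rw [pd_mul _ (by fun_prop) (by fun_prop)]
  have key2 : ∀ b c, (∑ e, G.Γ e b a x * G.cov1 (fun y i => pd i Υ y) c e x)
      = (∑ e, G.Γ e b a x * pd c (fun y => pd e Υ y) x)
        - ∑ e, (∑ f, G.Γ e c f x * G.Γ f b a x) * pd e Υ x := by
    intro b c
    unfold cov1
    simp only [mul_sub, Finset.sum_sub_distrib, Finset.mul_sum, Finset.sum_mul]
    congr 1
    rw [Finset.sum_comm]
    exact Finset.sum_congr rfl fun d _ => Finset.sum_congr rfl fun e _ => by ring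
  unfold curl Riem
  rw [key, key, key2, key2, pd_comm b c (by fun_prop)]
  simp only [add_mul, sub_mul, Finset.sum_add_distrib, Finset.sum_sub_distrib]
  ring

lemma Q_eq_sum (x : Pt n) (u v : Fin n → ℝ) :
    G.Q x u v = ∑ e, (∑ f, G.ginv x e f * u f) * v e := by
  rw [Q_symm]; unfold Q
  simp only [Finset.sum_mul]
  exact Finset.sum_congr rfl fun d _ => Finset.sum_congr rfl fun e _ => by ring

lemma lower_raise (x : Pt n) (u : Fin n → ℝ) (e : Fin n) :
    (∑ f, G.g x e f * ∑ k, G.ginv x f k * u k) = u e := by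
  have := G.Q_g_right' x u e
  rw [Q_eq_sum] at this
  rw [← this]
  exact Finset.sum_congr rfl fun d _ => by ring

lemma pd_Q (hΥ : ContDiff ℝ (⊤ : ℕ∞) Υ) (b : Fin n) (x : Pt n) :
    pd b (fun y => G.Q y (fun e => pd e Υ y) (fun e => pd e Υ y)) x
      = 2 * G.Q x (fun e => pd e Υ x) (fun e => G.cov1 (fun y i => pd i Υ y) b e x) := by
  obtain ⟨V, hV⟩ : ∃ V : Fin n → Pt n → ℝ,
      V = fun e y => ∑ f, G.ginv y e f * pd f Υ y := ⟨_, rfl⟩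
  have hVs : ∀ e, ContDiff ℝ (⊤ : ℕ∞) (V e) := by
    intro e; rw [hV]; fun_prop
  have hQ : ∀ y v, G.Q y (fun e => pd e Υ y) v = ∑ e, V e y * v e := by
    intro y v; rw [Q_eq_sum, hV]
  have hlow : ∀ e y, pd e Υ y = ∑ f, G.g y e f * V f y := by
    intro e y
    have := G.lower_raise y (fun k => pd k Υ y) e
    rw [hV]; exact this.symm
  have hd : ∀ e, pd b (fun y => pd e Υ y) x
      = (∑ f, (G.L e b f x + G.L f b e x) * V f x) + ∑ f, G.g x e f * pd b (V f) x := by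
    intro e
    have : (fun y => pd e Υ y) = fun y => ∑ f, G.g y e f * V f y := by
      ext y; exact hlow e y
    rw [this, pd_sum _ _ (fun f => by fun_prop), ← Finset.sum_add_distrib]
    refine Finset.sum_congr rfl fun f _ => ?_
    rw [pd_mul _ (by fun_prop) (hVs f), pd_g]
  -- contraction of the previous identity
  have h1 : (∑ e, V e x * pd b (fun y => pd e Υ y) x)
      = 2 * (∑ e, ∑ f, V e x * V f x * G.L f b e x) + ∑ f, pd f Υ x * pd b (V f) x := by
    have hA : (∑ e, ∑ f, V e x * V f x * G.L e b f x)
        = ∑ e, ∑ f, V e x * V f x * G.L f b e x := by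
      rw [Finset.sum_comm]
      exact Finset.sum_congr rfl fun d _ => Finset.sum_congr rfl fun e _ => by ring
    have hB : (∑ f, pd f Υ x * pd b (V f) x)
        = ∑ e, ∑ f, V e x * (G.g x e f * pd b (V f) x) := by
      rw [Finset.sum_comm]
      refine Finset.sum_congr rfl fun f _ => ?_
      rw [hlow f x, Finset.sum_mul]
      exact Finset.sum_congr rfl fun e _ => by rw [G.symm x e f]; ring
    rw [hB, two_mul]
    nth_rewrite 1 [← hA]
    simp only [← Finset.sum_add_distrib]
    refine Finset.sum_congr rfl fun e _ => ?_
    rw [hd e, ← Finset.sum_add_distrib, Finset.mul_sum]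
    exact Finset.sum_congr rfl fun f _ => by ring
  have h2 : pd b (fun y => G.Q y (fun e => pd e Υ y) (fun e => pd e Υ y)) x
      = (∑ f, pd f Υ x * pd b (V f) x) + ∑ e, V e x * pd b (fun y => pd e Υ y) x := by
    simp only [hQ]
    rw [pd_sum _ _ (fun f => by fun_prop), ← Finset.sum_add_distrib]
    refine Finset.sum_congr rfl fun f _ => ?_
    rw [pd_mul _ (hVs f) (by fun_prop)]; ring
  have h3 : G.Q x (fun e => pd e Υ x) (fun e => G.cov1 (fun y i => pd i Υ y) b e x)
      = (∑ e, V e x * pd b (fun y => pd e Υ y) x)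
        - ∑ e, ∑ f, V e x * V f x * G.L f b e x := by
    rw [hQ, ← Finset.sum_sub_distrib]
    refine Finset.sum_congr rfl fun e _ => ?_
    rw [cov1_eq, Q_symm, hQ, mul_sub, Finset.mul_sum]
    congr 1
    exact Finset.sum_congr rfl fun f _ => by ring
  rw [h2, h3]
  linarith

lemma curl_Q (hΥ : ContDiff ℝ (⊤ : ℕ∞) Υ) (a b c : Fin n) (x : Pt n) :
    G.curl (fun i j y => (1/2) * G.Q y (fun e => pd e Υ y) (fun e => pd e Υ y) * G.g y i j) a b c x
     = G.Q x (fun e => pd e Υ x) (fun e => G.cov1 (fun y i => pd i Υ y) b e x) * G.g x c a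
     - G.Q x (fun e => pd e Υ x) (fun e => G.cov1 (fun y i => pd i Υ y) c e x) * G.g x b a := by
  have hq : ContDiff ℝ (⊤ : ℕ∞) (fun y => G.Q y (fun e => pd e Υ y) (fun e => pd e Υ y)) := by
    unfold Q; fun_prop
  have key : ∀ b c, pd b (fun y => (1/2) * G.Q y (fun e => pd e Υ y) (fun e => pd e Υ y)
      * G.g y c a) x
      = G.Q x (fun e => pd e Υ x) (fun e => G.cov1 (fun y i => pd i Υ y) b e x) * G.g x c a
        + (1/2) * G.Q x (fun e => pd e Υ x) (fun e => pd e Υ x)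
          * (G.L c b a x + G.L a b c x) := by
    intro b c
    rw [pd_mul b (f := fun y => (1/2) * G.Q y (fun e => pd e Υ y) (fun e => pd e Υ y))
      (by fun_prop) (by fun_prop), pd_const_mul _ _ hq, pd_Q G Υ hΥ, pd_g]
    ring
  unfold curl
  rw [key, key]
  simp only [sum_Γ_mul, Q_mul_right, Q_g_right']
  simp only [G.L_symm _ c b, G.L_symm _ b a, G.L_symm _ c a]
  ring

lemma curl_sq (hΥ : ContDiff ℝ (⊤ : ℕ∞) Υ) (a b c : Fin n) (x : Pt n) :
    G.curl (fun i j y => pd i Υ y * pd j Υ y) a b c x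
     = pd c Υ x * G.cov1 (fun y i => pd i Υ y) b a x
      - pd b Υ x * G.cov1 (fun y i => pd i Υ y) c a x := by
  unfold curl
  rw [pd_mul _ (by fun_prop) (by fun_prop), pd_mul _ (by fun_prop) (by fun_prop), pd_comm b c hΥ]
  simp only [sum_Γ_mul, Q_mul_right, cov1_eq]
  ring

lemma cov1_smooth (hΥ : ContDiff ℝ (⊤ : ℕ∞) Υ) (a b : Fin n) :
    ContDiff ℝ (⊤ : ℕ∞) (fun x => G.cov1 (fun y i => pd i Υ y) a b x) := by
  unfold cov1; fun_prop

lemma curl_Bt (hΥ : ContDiff ℝ (⊤ : ℕ∞) Υ) (a b c : Fin n) (x : Pt n) :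
    G.curl (fun i j y => G.Bt Υ i j y) a b c x
      = (∑ e, G.Riem b c e a x * pd e Υ x)
       + (pd c Υ x * G.cov1 (fun y i => pd i Υ y) b a x
          - pd b Υ x * G.cov1 (fun y i => pd i Υ y) c a x)
       - (G.Q x (fun e => pd e Υ x) (fun e => G.cov1 (fun y i => pd i Υ y) b e x) * G.g x c a
     - G.Q x (fun e => pd e Υ x) (fun e => G.cov1 (fun y i => pd i Υ y) c e x) * G.g x b a) := by
  have hq : ContDiff ℝ (⊤ : ℕ∞) (fun y => G.Q y (fun e => pd e Υ y) (fun e => pd e Υ y)) := by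
    unfold Q; fun_prop
  have h : (fun i j y => G.Bt Υ i j y) = fun i j y => (pd i Υ y * pd j Υ y
      - G.cov1 (fun y i => pd i Υ y) i j y)
      - (1/2) * G.Q y (fun e => pd e Υ y) (fun e => pd e Υ y) * G.g y i j := by
    ext i j y; unfold Bt; ring
  have hc := cov1_smooth G Υ hΥ
  rw [h, curl_sub G _ _ (fun i j => by fun_prop) (fun i j => by fun_prop),
    curl_sub G _ _ (fun i j => by fun_prop) (fun i j => by fun_prop),
    curl_hess G Υ hΥ, curl_Q G Υ hΥ, curl_sq G Υ hΥ]
  ring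

lemma Bt_smooth (hΥ : ContDiff ℝ (⊤ : ℕ∞) Υ) (a b : Fin n) :
    ContDiff ℝ (⊤ : ℕ∞) (fun x => G.Bt Υ a b x) := by
  have hq : ContDiff ℝ (⊤ : ℕ∞) (fun y => G.Q y (fun e => pd e Υ y) (fun e => pd e Υ y)) := by
    unfold Q; fun_prop
  have hc := cov1_smooth G Υ hΥ
  unfold Bt; fun_prop

lemma Weyl_contr (a b c : Fin n) (x : Pt n) :
    (∑ d, (∑ e, G.ginv x d e * G.Weyl c b a e x) * pd d Υ x)
      = (∑ e, G.Riem b c e a x * pd e Υ x)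
        - (pd b Υ x * G.Schouten c a x - pd c Υ x * G.Schouten b a x
          + G.g x a c * G.Q x (fun e => pd e Υ x) (fun e => G.Schouten b e x)
          - G.g x a b * G.Q x (fun e => pd e Υ x) (fun e => G.Schouten c e x)) := by
  have h1 : (∑ d, (∑ e, G.ginv x d e * G.Weyl c b a e x) * pd d Υ x)
      = G.Q x (fun e => pd e Υ x) (fun e => G.Weyl c b a e x) := by
    unfold Q
    simp only [Finset.sum_mul]
    exact Finset.sum_congr rfl fun d _ => Finset.sum_congr rfl fun e _ => by ring
  have h2 : (∑ e, G.Riem b c e a x * pd e Υ x)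
      = G.Q x (fun e => pd e Υ x) (fun e => G.Riem4 b c e a x) := by
    unfold Q
    simp only [Riem_eq, Finset.sum_mul]
    exact Finset.sum_congr rfl fun d _ => Finset.sum_congr rfl fun e _ => by ring
  have h3 : ∀ e, G.Riem4 c b a e x = G.Riem4 b c e a x := by
    intro e
    rw [Riem4_anti, Riem4_anti']; ring
  rw [h1, h2]
  unfold Weyl
  simp only [h3, Q_sub_right, Q_add_right, Q_mul_right, Q_mul_right', Q_g_right]
  rw [G.Schouten_symm c a, G.Schouten_symm b a]
  ring

lemma Cotton_hat (hn : 4 ≤ n)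
    (hΥ : ContDiff ℝ (⊤ : ℕ∞) Υ)
    (hconf : ∀ x a b, Ghat.g x a b = Real.exp (2 * Υ x) * G.g x a b)
    (a b c : Fin n) (x : Pt n) :
    Ghat.Cotton a b c x = G.Cotton a b c x
      + ∑ d, (∑ e, G.ginv x d e * G.Weyl c b a e x) * pd d Υ x := by
  rw [Cotton_eq, Cotton_eq, curl_hat G Ghat Υ hΥ hconf _ (fun i j x => Ghat.Schouten_symm i j x),
    Weyl_contr]
  have hS : Ghat.Schouten
      = fun i j y => G.Schouten i j y + G.Bt Υ i j y := by
    ext i j y; exact Schouten_hat G Ghat Υ hn hΥ hconf i j y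
  rw [hS]
  beta_reduce
  rw [curl_add G _ _ (fun i j => by fun_prop) (Bt_smooth G Υ hΥ), curl_Bt G Υ hΥ]
  have hQB : ∀ c, G.Q x (fun e => pd e Υ x) (fun e => G.Bt Υ c e x)
      = - G.Q x (fun e => pd e Υ x) (fun e => G.cov1 (fun y i => pd i Υ y) c e x)
        + (1/2) * G.Q x (fun e => pd e Υ x) (fun e => pd e Υ x) * pd c Υ x := by
    intro c
    have : ∀ e, G.Bt Υ c e x = (-1) * G.cov1 (fun y i => pd i Υ y) c e x + pd c Υ x * pd e Υ x
       - (1/2) * G.Q x (fun e => pd e Υ x) (fun e => pd e Υ x) * G.g x c e := by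
      intro e; unfold Bt; ring
    simp only [this, Q_sub_right, Q_add_right, Q_mul_right, Q_g_right']
    ring
  simp only [Q_add_right, hQB]
  unfold Bt
  rw [G.symm x c a, G.symm x b a]
  ring

end conf

end MetricG

/-! ### Pure radiation metrics with parallel rays -/

namespace MetricG

variable {n : ℕ} (G : MetricG n)

/-- Lowering an index. -/
def low (K : Pt n → Pt n) (b : Fin n) (x : Pt n) : ℝ := ∑ a, G.g x a b * K x a

lemma ip_eq (K : Pt n → Pt n) (x X : Pt n) : G.ip x (K x) X = ∑ b, G.low K b x * X b := by
  unfold ip low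
  rw [Finset.sum_comm]
  simp only [Finset.sum_mul]

lemma Q_low (K : Pt n → Pt n) (x : Pt n) (u : Fin n → ℝ) :
    G.Q x (fun b => G.low K b x) u = ∑ b, K x b * u b := by
  have h : ∀ b, (∑ f, G.ginv x b f * G.low K f x) = K x b := by
    intro b
    unfold low
    simp only [Finset.mul_sum]
    rw [Finset.sum_comm]
    have : ∀ a, (∑ f, G.ginv x b f * (G.g x a f * K x a)) = if b = a then K x a else 0 := by
      intro a
      simp only [G.symm x a, ← mul_assoc, ← Finset.sum_mul, G.inv_mul]; simp
    simp only [this]; simp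
  rw [Q_eq_sum]; simp only [h]

lemma low_ne (K : Pt n → Pt n) (x : Pt n) (hK : K x ≠ 0) : ∃ i, G.low K i x ≠ 0 := by
  by_contra! h
  apply hK
  ext b
  have := G.Q_low K x (fun i => if i = b then 1 else 0)
  simp only [h] at this
  simpa [Q] using this.symm

lemma Ricci_contr (K : Pt n → Pt n) (hpr : G.PureRadiation K) (x : Pt n) (i a b : Fin n) :
    G.low K i x * G.Ricci a b x = G.low K a x * G.Ricci i b x := by
  have h := hpr x (fun c => G.low K i x * (if c = a then 1 else 0)
    - G.low K a x * (if c = i then 1 else 0)) (by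
      rw [ip_eq]
      simp only [mul_sub, Finset.sum_sub_distrib]
      simp
      ring) b
  simp only [mul_sub, Finset.sum_sub_distrib] at h
  simp at h
  linarith

lemma Scal_zero (K : Pt n → Pt n) (hK0 : ∀ x, K x ≠ 0) (hnull : G.IsNull K)
    (hpr : G.PureRadiation K) (x : Pt n) : G.Scal x = 0 := by
  obtain ⟨i, hi⟩ := G.low_ne K x (hK0 x)
  have h1 : G.low K i x * G.Scal x
      = G.Q x (fun b => G.low K b x) (fun b => G.Ricci i b x) := by
    unfold Scal Q
    simp only [Finset.mul_sum]
    refine Finset.sum_congr rfl fun a _ => Finset.sum_congr rfl fun b _ => ?_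
    have := G.Ricci_contr K hpr x i a b
    linear_combination G.ginv x a b * this
  have h2 := hpr x (K x) (hnull x) i
  rw [Q_low] at h1
  have h3 : (∑ b, K x b * G.Ricci i b x) = 0 := by
    rw [← h2]
    exact Finset.sum_congr rfl fun b _ => by rw [G.Ricci_symm i b]; ring
  rw [h3] at h1
  exact (mul_eq_zero.1 h1).resolve_left hi

lemma Schouten_X (K : Pt n → Pt n) (hK0 : ∀ x, K x ≠ 0) (hnull : G.IsNull K)
    (hpr : G.PureRadiation K) (x X : Pt n) (hX : G.ip x (K x) X = 0) (b : Fin n) :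
    (∑ a, G.Schouten b a x * X a) = 0 := by
  have h := hpr x X hX b
  unfold Schouten
  rw [G.Scal_zero K hK0 hnull hpr]
  simp only [zero_div, zero_mul, sub_zero, mul_assoc, ← Finset.mul_sum]
  simp only [G.Ricci_symm b, h, mul_zero]

lemma Riem_K (K : Pt n → Pt n) (f : Pt n → Fin n → ℝ) (hKs : SmoothVF K) (hfs : SmoothForm f)
    (hray : G.ParallelRays K f) (a b c : Fin n) (x : Pt n) :
    (∑ d, G.Riem a b c d x * K x d)
      = (pd a (fun y => f y b) x - pd b (fun y => f y a) x) * K x c := by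
  have hK : ∀ b, ContDiff ℝ (⊤ : ℕ∞) (fun x => K x b) := hKs
  have hf : ∀ b, ContDiff ℝ (⊤ : ℕ∞) (fun x => f x b) := hfs
  have hdK : ∀ y a c, pd a (fun z => K z c) y = f y a * K y c - ∑ e, G.Γ c a e y * K y e := by
    intro y a c
    have := hray y a c
    unfold covVec at this
    linarith
  have key : ∀ a b, pd a (fun y => pd b (fun z => K z c) y) x
      = pd a (fun y => f y b) x * K x c + f x b * pd a (fun z => K z c) x
        - (∑ e, pd a (fun y => G.Γ c b e y) x * K x e)
        - (f x a * ∑ e, G.Γ c b e x * K x e)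
        + ∑ d, (∑ e, G.Γ c b e x * G.Γ e a d x) * K x d := by
    intro a b
    have h1 : (fun y => pd b (fun z => K z c) y)
      = fun y => f y b * K y c - ∑ e, G.Γ c b e y * K y e := by
      ext y; exact hdK y b c
    rw [h1, pd_sub _ (by fun_prop) (by fun_prop), pd_mul _ (by fun_prop) (by fun_prop),
      pd_sum _ _ (fun e => by fun_prop)]
    have h2 : (∑ e, pd a (fun y => G.Γ c b e y * K y e) x)
        = (∑ e, pd a (fun y => G.Γ c b e y) x * K x e)
          + (f x a * ∑ e, G.Γ c b e x * K x e)
          - ∑ d, (∑ e, G.Γ c b e x * G.Γ e a d x) * K x d := by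
      have h3 : (∑ d, (∑ e, G.Γ c b e x * G.Γ e a d x) * K x d)
          = ∑ e, G.Γ c b e x * ∑ d, G.Γ e a d x * K x d := by
        simp only [Finset.sum_mul, Finset.mul_sum]
        rw [Finset.sum_comm]
        exact Finset.sum_congr rfl fun d _ => Finset.sum_congr rfl fun e _ => by ring
      rw [h3, Finset.mul_sum, ← Finset.sum_add_distrib, ← Finset.sum_sub_distrib]
      refine Finset.sum_congr rfl fun e _ => ?_
      rw [pd_mul _ (by fun_prop) (by fun_prop), hdK x a e]
      ring
    rw [h2]; ring
  have hc := pd_comm a b (x := x) (hK c)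
  rw [key, key, hdK x a c, hdK x b c] at hc
  unfold Riem
  simp only [add_mul, sub_mul, Finset.sum_add_distrib, Finset.sum_sub_distrib]
  linarith

lemma Weyl_KX (K : Pt n → Pt n) (f : Pt n → Fin n → ℝ) (hKs : SmoothVF K) (hfs : SmoothForm f)
    (hK0 : ∀ x, K x ≠ 0) (hnull : G.IsNull K)
    (hpr : G.PureRadiation K) (hray : G.ParallelRays K f)
    (x X : Pt n) (hX : G.ip x (K x) X = 0) (a b : Fin n) :
    (∑ c, ∑ d, G.Weyl a b c d x * K x c * X d) = 0 := by
  have hP1 := G.Schouten_X K hK0 hnull hpr x X hX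
  have hP2 := G.Schouten_X K hK0 hnull hpr x (K x) (hnull x)
  have hR : (∑ c, ∑ d, G.Riem4 a b c d x * K x c * X d) = 0 := by
    have h1 : ∀ d, (∑ c, G.Riem4 a b d c x * K x c)
        = (pd a (fun y => f y b) x - pd b (fun y => f y a) x) * G.low K d x := by
      intro d
      unfold Riem4 low
      simp only [Finset.sum_mul]
      rw [Finset.sum_comm, Finset.mul_sum]
      refine Finset.sum_congr rfl fun e _ => ?_
      simp only [mul_assoc, ← Finset.mul_sum]
      rw [G.Riem_K K f hKs hfs hray, G.symm x e d]
      ring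
    rw [Finset.sum_comm]
    have h2 : ∀ d, (∑ c, G.Riem4 a b c d x * K x c * X d)
        = - (pd a (fun y => f y b) x - pd b (fun y => f y a) x) * (G.low K d x * X d) := by
      intro d
      rw [← Finset.sum_mul]
      simp only [G.Riem4_anti' a b d]
      simp only [neg_mul, Finset.sum_neg_distrib, h1]
      ring
    simp only [h2]
    rw [← Finset.mul_sum, ← ip_eq, hX, mul_zero]
  have hexp : (∑ c, ∑ d, G.Weyl a b c d x * K x c * X d)
      = (∑ c, ∑ d, G.Riem4 a b c d x * K x c * X d)
      - ((∑ c, G.g x c a * K x c) * (∑ d, G.Schouten b d x * X d)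
        - (∑ c, G.g x c b * K x c) * (∑ d, G.Schouten a d x * X d)
        + (∑ c, G.Schouten a c x * K x c) * (∑ d, G.g x d b * X d)
        - (∑ c, G.Schouten b c x * K x c) * (∑ d, G.g x d a * X d)) := by
    simp only [Finset.sum_mul_sum, ← Finset.sum_sub_distrib, ← Finset.sum_add_distrib]
    refine Finset.sum_congr rfl fun c _ => Finset.sum_congr rfl fun d _ => ?_
    unfold Weyl; ring
  rw [hexp, hR, hP1, hP1, hP2, hP2]; ring

/-- The orthogonal complement of `K` is parallel. -/
lemma low_cov (K : Pt n → Pt n) (f : Pt n → Fin n → ℝ) (hKs : SmoothVF K)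
    (hray : G.ParallelRays K f) (b d : Fin n) (x : Pt n) :
    pd b (fun y => G.low K d y) x = f x b * G.low K d x + ∑ e, G.Γ e b d x * G.low K e x := by
  have hK : ∀ b, ContDiff ℝ (⊤ : ℕ∞) (fun x => K x b) := hKs
  have hdK : ∀ a c, pd a (fun z => K z c) x = f x a * K x c - ∑ e, G.Γ c a e x * K x e := by
    intro a c
    have := hray x a c
    unfold covVec at this
    linarith
  have h1 : (∑ a, G.g x a d * ∑ e, G.Γ a b e x * K x e) = ∑ e, G.L d b e x * K x e := by
    simp only [Finset.mul_sum]
    rw [Finset.sum_comm]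
    refine Finset.sum_congr rfl fun e _ => ?_
    rw [← sum_g_Γ, Finset.sum_mul]
    exact Finset.sum_congr rfl fun a _ => by rw [G.symm x a d]; ring
  have h2 : (∑ e, G.Γ e b d x * G.low K e x) = ∑ a, G.L a b d x * K x a := by
    rw [sum_Γ_mul, Q_symm, Q_low]
    exact Finset.sum_congr rfl fun a _ => by ring
  have h3 : pd b (fun y => G.low K d y) x
      = ∑ a, ((G.L a b d x + G.L d b a x) * K x a
        + G.g x a d * (f x b * K x a - ∑ e, G.Γ a b e x * K x e)) := by
    unfold low
    rw [pd_sum _ _ (fun e => by fun_prop)]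
    refine Finset.sum_congr rfl fun a _ => ?_
    rw [pd_mul _ (by fun_prop) (by fun_prop), pd_g, hdK]
  rw [h3, h2]
  simp only [add_mul, mul_sub, Finset.sum_add_distrib, Finset.sum_sub_distrib]
  rw [h1]
  have h4 : (∑ a, G.g x a d * (f x b * K x a)) = f x b * G.low K d x := by
    unfold low
    rw [Finset.mul_sum]
    exact Finset.sum_congr rfl fun a _ => by ring
  rw [h4]; ring

lemma cov_Schouten_X (K : Pt n → Pt n) (f : Pt n → Fin n → ℝ) (hKs : SmoothVF K)
    (hK0 : ∀ x, K x ≠ 0) (hnull : G.IsNull K)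
    (hpr : G.PureRadiation K) (hray : G.ParallelRays K f)
    (x X : Pt n) (hX : G.ip x (K x) X = 0) (b c : Fin n) :
    (∑ a, (pd b (fun y => G.Schouten c a y) x - ∑ e, G.Γ e b a x * G.Schouten c e x) * X a)
      = 0 := by
  have hK : ∀ b, ContDiff ℝ (⊤ : ℕ∞) (fun x => K x b) := hKs
  have hlow : ∀ d, ContDiff ℝ (⊤ : ℕ∞) (fun y => G.low K d y) := by
    intro d; unfold low; fun_prop
  obtain ⟨i, hi⟩ := G.low_ne K x (hK0 x)
  -- the Schouten tensor is a multiple of the lowered `K`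
  have hS : ∀ y a, G.low K i y * G.Schouten c a y = G.low K a y * G.Schouten c i y := by
    intro y a
    have h := G.Schouten_X K hK0 hnull hpr y (fun e => G.low K i y * (if e = a then 1 else 0)
      - G.low K a y * (if e = i then 1 else 0)) (by
        rw [ip_eq]
        simp only [mul_sub, Finset.sum_sub_distrib]
        simp
        ring) c
    simp only [mul_sub, Finset.sum_sub_distrib] at h
    simp at h
    linarith
  have hd : ∀ a, pd b (fun y => G.low K i y) x * G.Schouten c a x
      + G.low K i x * pd b (fun y => G.Schouten c a y) x
      = pd b (fun y => G.low K a y) x * G.Schouten c i x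
      + G.low K a x * pd b (fun y => G.Schouten c i y) x := by
    intro a
    rw [← pd_mul b (hlow i) (by fun_prop), ← pd_mul b (hlow a) (by fun_prop)]
    congr 1; ext y; exact hS y a
  have hX' : (∑ a, G.low K a x * X a) = 0 := by rw [← ip_eq]; exact hX
  have hPX := G.Schouten_X K hK0 hnull hpr x X hX c
  have hΓ : ∀ a, G.low K i x * (∑ e, G.Γ e b a x * G.Schouten c e x)
      = (∑ e, G.Γ e b a x * G.low K e x) * G.Schouten c i x := by
    intro a
    rw [Finset.mul_sum, Finset.sum_mul]
    refine Finset.sum_congr rfl fun e _ => ?_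
    linear_combination G.Γ e b a x * hS x e
  have hmain : G.low K i x *
      (∑ a, (pd b (fun y => G.Schouten c a y) x - ∑ e, G.Γ e b a x * G.Schouten c e x) * X a)
      = (f x b * G.Schouten c i x + pd b (fun y => G.Schouten c i y) x)
          * (∑ a, G.low K a x * X a)
        - pd b (fun y => G.low K i y) x * ∑ a, G.Schouten c a x * X a := by
    simp only [Finset.mul_sum, ← Finset.sum_sub_distrib]
    refine Finset.sum_congr rfl fun a _ => ?_
    have e1 := hd a
    have e2 := hΓ a
    have e3 := G.low_cov K f hKs hray b a x
    rw [e3] at e1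
    linear_combination X a * (e1 - e2)
  rw [hX', hPX] at hmain
  simp only [mul_zero, sub_zero] at hmain
  exact (mul_eq_zero.1 hmain).resolve_left hi

lemma Cotton_X (K : Pt n → Pt n) (f : Pt n → Fin n → ℝ) (hKs : SmoothVF K)
    (hK0 : ∀ x, K x ≠ 0) (hnull : G.IsNull K)
    (hpr : G.PureRadiation K) (hray : G.ParallelRays K f)
    (x X : Pt n) (hX : G.ip x (K x) X = 0) (b c : Fin n) :
    (∑ a, G.Cotton a b c x * X a) = 0 := by
  have h1 := G.cov_Schouten_X K f hKs hK0 hnull hpr hray x X hX b c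
  have h2 := G.cov_Schouten_X K f hKs hK0 hnull hpr hray x X hX c b
  simp only [Cotton_eq, curl, sub_mul, Finset.sum_sub_distrib] at h1 h2 ⊢
  rw [h1, h2]; ring

lemma ip_hat (Ghat : MetricG n) (Υ : Pt n → ℝ)
    (hconf : ∀ x a b, Ghat.g x a b = Real.exp (2 * Υ x) * G.g x a b) (x X Y : Pt n) :
    Ghat.ip x X Y = Real.exp (2 * Υ x) * G.ip x X Y := by
  unfold ip
  simp only [hconf, Finset.mul_sum, mul_assoc]

end MetricG

/-- If the metric g is conformal to a pure radiation metric with parallel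
rays spanned by K (ĝ = e^{2Υ}g aligned pure radiation), then the Weyl tensor of g
satisfies C_{abcd}K^cX^d = 0 for all X ⊥ K, and the gradient Υ_a = ∇_aΥ satisfies
(A_{abc} + C_{cba}{}^dΥ_d)X^a = 0 for all X ⊥ K. -/
theorem stmt_10 {n : ℕ} (hn : 4 ≤ n) (G Ghat : MetricG n) (Υ : Pt n → ℝ)
    (hΥ : ContDiff ℝ (⊤ : ℕ∞) Υ)
    (hconf : ∀ x a b, Ghat.g x a b = Real.exp (2 * Υ x) * G.g x a b)
    (K : Pt n → Pt n) (f : Pt n → Fin n → ℝ) (hKs : SmoothVF K) (hfs : SmoothForm f)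
    (hK0 : ∀ x, K x ≠ 0) (hnull : G.IsNull K)
    (hpr : Ghat.PureRadiation K) (hray : Ghat.ParallelRays K f) :
    (∀ x (X : Pt n), G.ip x (K x) X = 0 → ∀ a b,
        (∑ c, ∑ d, G.Weyl a b c d x * K x c * X d) = 0) ∧
      ∀ x (X : Pt n), G.ip x (K x) X = 0 → ∀ b c,
        (∑ a, (G.Cotton a b c x
          + ∑ d, (∑ e, G.ginv x d e * G.Weyl c b a e x) * pd d Υ x) * X a) = 0 := by
  have hnull' : Ghat.IsNull K := fun x => by
    rw [MetricG.ip_hat G Ghat Υ hconf, hnull x, mul_zero]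
  constructor
  · intro x X hX a b
    have hX' : Ghat.ip x (K x) X = 0 := by rw [MetricG.ip_hat G Ghat Υ hconf, hX, mul_zero]
    have h := Ghat.Weyl_KX K f hKs hfs hK0 hnull' hpr hray x X hX' a b
    simp only [MetricG.Weyl_hat G Ghat Υ hn hΥ hconf, mul_assoc, ← Finset.mul_sum] at h
    simp only [mul_assoc, ← Finset.mul_sum]
    exact (mul_eq_zero.1 h).resolve_left (Real.exp_ne_zero _)
  · intro x X hX b c
    have hX' : Ghat.ip x (K x) X = 0 := by rw [MetricG.ip_hat G Ghat Υ hconf, hX, mul_zero]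
    have h := Ghat.Cotton_X K f hKs hK0 hnull' hpr hray x X hX' b c
    simpa only [MetricG.Cotton_hat G Ghat Υ hn hΥ hconf] using h
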